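/- For every nonnegative integer N the following holds. Let σ_N(x) ∈ ℝ[x] denote the N×N Hankel determinant σ_N = det(a_{i+j})_{0 ≤ i,j ≤ N−1} (with the convention σ_0 = 1). Let I ⊆ ℝ be an open interval on which σ_N(x)·σ_{N+1}(x) ≠ 0, and define v : I → ℝ by v(x) = σ_{N+1}'(x)/σ_{N+1}(x) − σ_N'(x)/σ_N(x), i.e. v = d/dx log(σ_{N+1}/σ_N). Then v satisfies the Painlevé II equation v''(x) = 2·v(x)³ − 4x·v(x) + 4(N+1) on I; that is, v is the rational solution of the Painlevé II equation with parameter α = N + 1. -/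

import Mathlib

/-!
Write `L` for the functional `z^k ↦ a_k` on `ℝ[x][z]` and let `Q_n` be the `n`-th orthogonal
polynomial, scaled by `σ_n` so that its coefficients (cofactors of the Hankel matrix) lie in
`ℝ[x]`; then `L(z^i Q_n) = δ_{in} σ_{n+1}` for `i ≤ n`. In the
derivative of `L(z^i Q_n)`, `i ≤ n`, the quadratic term of the recurrence for `a_n` enters only
through the associated polynomial `Q̃_n` (`derivative_moment`). Evaluating
`L(Q_m (∂Q_n - Q̃_n))` in two ways, for `m = n` and `m = n - 1`, yields

* the coefficient of `z^{n-1}` in `Q_n` is `-σ_n'` (`subleading_step`);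
* the Toda equation `σ_{n+1} σ_{n-1} = σ_n σ_n'' - σ_n'^2 + x σ_n^2` (`toda_of_subleading`).

From the Toda equation, the two bilinear identities

* `σ_{N+1}'' σ_N - 2 σ_{N+1}' σ_N' + σ_{N+1} σ_N'' = 0`,
* `σ_{N+2}' σ_N - σ_{N+2} σ_N' = (2N+3) σ_{N+1}^2`

follow by simultaneous induction (`hirota_step`, `wronskian_step`). The second also shows
`σ_{N+2} ≠ 0`, which is what allows the next step to cancel determinants.

Finally, with `A = σ_{N+2} σ_N / σ_{N+1}^2`, the Toda equation and the first identity read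
`v' = 2A - 2x + v²`, and the second reads `A' = (2N+3) - 2vA`. Eliminating `A` gives
Painlevé II with `α = N + 1`.
-/

open Polynomial Finset

/-- The polynomials `a_n` from the Hankel determinant representation of the
rational solutions of Painlevé II: `a₀ = x`, `a₁ = 1`,
`a_{n+1} = a_n' + ∑_{k=0}^{n-1} a_k a_{n-1-k}`. -/
noncomputable def painleveA : ℕ → ℝ[X]
  | 0 => X
  | 1 => 1
  | n + 2 => derivative (painleveA (n + 1)) +
      ∑ k ∈ (Finset.range (n + 1)).attach, painleveA k * painleveA (n - k)
  decreasing_by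
  · omega
  · have := Finset.mem_range.mp k.2; omega
  · omega

/-- The `N×N` Hankel determinant `σ_N = det(a_{i+j})_{0 ≤ i,j ≤ N-1}`
(with `σ_0 = 1`, the determinant of the empty matrix). -/
noncomputable def painleveSigma (N : ℕ) : ℝ[X] :=
  (Matrix.of fun i j : Fin N => painleveA ((i : ℕ) + (j : ℕ))).det

/-! ### Orthogonal polynomials of the moment functional -/

/-- The coefficients (padded by zero) of the orthogonal polynomial
`Q_n(z) = ∑_{j ≤ n} q_{n,j} z^j` of the moment functional `z^k ↦ a_k`, normalised without
denominators: they are the last column of the adjugate of the `(n+1) × (n+1)` Hankel matrix,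
so the leading coefficient is `σ_n`. -/
noncomputable def orthoCoeff (n j : ℕ) : ℝ[X] :=
  if h : j < n + 1 then
    (Matrix.of fun i j : Fin (n + 1) => painleveA ((i : ℕ) + (j : ℕ))).adjugate
      ⟨j, h⟩ (Fin.last n)
  else 0

/-- The moment `L(z^i F)` of `F = ∑_{j ≤ n} f_j z^j` for the functional `L : z^k ↦ a_k`. -/
noncomputable def hankelMoment (f : ℕ → ℝ[X]) (n i : ℕ) : ℝ[X] :=
  ∑ j ∈ range (n + 1), f j * painleveA (i + j)

/-- Coefficients of `∂Q_n - Q̃_n`, where `∂` differentiates coefficients with respect to `x` and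
`Q̃_n(s) = L_t((Q_n(s) - Q_n(t)) / (s - t))` is the associated polynomial of `Q_n`. -/
noncomputable def evolCoeff (n m : ℕ) : ℝ[X] :=
  derivative (orthoCoeff n m)
    - ∑ j ∈ range (n + 1), if m < j then orthoCoeff n j * painleveA (j - 1 - m) else 0

lemma painleveA_zero : painleveA 0 = X := by rw [painleveA]

lemma painleveA_one : painleveA 1 = 1 := by rw [painleveA]

/-- The defining recurrence in a form that also covers `a_1 = a_0'`. -/
lemma derivative_painleveA (n : ℕ) : derivative (painleveA n) =
    painleveA (n + 1) - ∑ k ∈ range n, painleveA k * painleveA (n - 1 - k) := by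
  cases n with
  | zero => simp [painleveA_zero, painleveA_one]
  | succ n =>
    rw [painleveA, Finset.sum_attach (range (n + 1)) (fun k => painleveA k * painleveA (n - k))]
    simp

/-- The convolution term at index `i + j`, split into a combination of columns `m < j` and a
combination of rows `l < i` of the Hankel matrix. -/
lemma convolution_split (i j : ℕ) :
    ∑ k ∈ range (i + j), painleveA k * painleveA (i + j - 1 - k) =
      ∑ m ∈ range j, painleveA (j - 1 - m) * painleveA (i + m)
      + ∑ l ∈ range i, painleveA (i - 1 - l) * painleveA (l + j) := by
  rw [add_comm i j, Finset.sum_range_add]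
  congr 1
  · rw [← Finset.sum_range_reflect]
    refine Finset.sum_congr rfl fun m hm => ?_
    have := Finset.mem_range.mp hm
    congr 2; omega
  · refine Finset.sum_congr rfl fun l hl => ?_
    have := Finset.mem_range.mp hl
    rw [mul_comm, add_comm l j]
    congr 2; omega

lemma orthoCoeff_moment (n : ℕ) (i : ℕ) (hi : i ≤ n) :
    hankelMoment (orthoCoeff n) n i = if i = n then painleveSigma (n + 1) else 0 := by
  have h := congrFun (congrFun (Matrix.mul_adjugate
    (Matrix.of fun i j : Fin (n + 1) => painleveA ((i : ℕ) + (j : ℕ))))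
      ⟨i, Nat.lt_succ_of_le hi⟩) (Fin.last n)
  rw [Matrix.mul_apply] at h
  unfold hankelMoment
  rw [Finset.sum_range]
  have e : ∀ j : Fin (n + 1), orthoCoeff n j * painleveA (i + j) =
      (Matrix.of fun i j : Fin (n + 1) => painleveA ((i : ℕ) + (j : ℕ)))
        ⟨i, Nat.lt_succ_of_le hi⟩ j *
      (Matrix.of fun i j : Fin (n + 1) => painleveA ((i : ℕ) + (j : ℕ))).adjugate
        j (Fin.last n) := by
    intro j
    simp [orthoCoeff, j.isLt, mul_comm, -Order.lt_add_one_iff]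
  rw [Finset.sum_congr rfl fun j _ => e j, h]
  simp [Matrix.smul_apply, Matrix.one_apply, painleveSigma, Fin.ext_iff]

lemma orthoCoeff_self (n : ℕ) : orthoCoeff n n = painleveSigma n := by
  have : orthoCoeff n n =
      (Matrix.of fun i j : Fin (n + 1) => painleveA ((i : ℕ) + (j : ℕ))).adjugate
        (Fin.last n) (Fin.last n) := by
    simp [orthoCoeff, Fin.last]
  rw [this, Matrix.adjugate_fin_succ_eq_det_submatrix]
  simp only [Fin.val_last, Even.neg_one_pow (Even.add_self n), one_mul, Fin.succAbove_last]
  rfl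

/-- Symmetry of the bilinear form `(F, G) ↦ L(F G)`. -/
lemma moment_pairing (f g : ℕ → ℝ[X]) (n m : ℕ) :
    ∑ i ∈ range (n + 1), f i * hankelMoment g m i =
      ∑ j ∈ range (m + 1), g j * hankelMoment f n j := by
  simp only [hankelMoment, Finset.mul_sum]
  rw [Finset.sum_comm]
  refine Finset.sum_congr rfl fun j _ => Finset.sum_congr rfl fun i _ => ?_
  rw [add_comm i j]; ring

/-- Evolution of the moments of `Q_n`. The row part of the convolution term drops out because
`Q_n` is orthogonal to `z^l` for `l < i ≤ n`. -/
lemma derivative_moment (n i : ℕ) (hi : i ≤ n) :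
    derivative (hankelMoment (orthoCoeff n) n i) =
      hankelMoment (evolCoeff n) n i + hankelMoment (orthoCoeff n) n (i + 1) := by
  have hrow : ∑ j ∈ range (n + 1), orthoCoeff n j *
      ∑ l ∈ range i, painleveA (i - 1 - l) * painleveA (l + j) = 0 := by
    have : ∑ l ∈ range i, painleveA (i - 1 - l) * hankelMoment (orthoCoeff n) n l = 0 := by
      refine Finset.sum_eq_zero fun l hl => ?_
      have := Finset.mem_range.mp hl
      rw [orthoCoeff_moment n l (by omega), if_neg (by omega), mul_zero]
    rw [← this]
    simp only [hankelMoment, Finset.mul_sum]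
    rw [Finset.sum_comm]
    refine Finset.sum_congr rfl fun j _ => Finset.sum_congr rfl fun i _ => ?_
    ring
  have hcol : ∑ j ∈ range (n + 1), orthoCoeff n j *
      ∑ m ∈ range j, painleveA (j - 1 - m) * painleveA (i + m) =
      ∑ m ∈ range (n + 1), (∑ j ∈ range (n + 1),
        if m < j then orthoCoeff n j * painleveA (j - 1 - m) else 0) * painleveA (i + m) := by
    simp only [Finset.sum_mul, Finset.mul_sum]
    rw [Finset.sum_comm (s := range (n + 1)) (t := range (n + 1))]
    refine Finset.sum_congr rfl fun j hj => ?_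
    have hj := Finset.mem_range.mp hj
    have hs : range j = (range (n + 1)).filter (· < j) := by
      ext m; simp only [Finset.mem_range, Finset.mem_filter]; omega
    rw [hs, Finset.sum_filter]
    refine Finset.sum_congr rfl fun m _ => ?_
    split_ifs <;> ring
  have key : derivative (hankelMoment (orthoCoeff n) n i) =
      ∑ j ∈ range (n + 1), derivative (orthoCoeff n j) * painleveA (i + j)
      + hankelMoment (orthoCoeff n) n (i + 1)
      - (∑ j ∈ range (n + 1), orthoCoeff n j *
          ∑ m ∈ range j, painleveA (j - 1 - m) * painleveA (i + m)
        + ∑ j ∈ range (n + 1), orthoCoeff n j *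
          ∑ l ∈ range i, painleveA (i - 1 - l) * painleveA (l + j)) := by
    simp only [hankelMoment]
    rw [derivative_sum, ← Finset.sum_add_distrib, ← Finset.sum_add_distrib,
      ← Finset.sum_sub_distrib]
    refine Finset.sum_congr rfl fun j _ => ?_
    rw [derivative_mul, derivative_painleveA, convolution_split,
      show i + 1 + j = i + j + 1 by ring]
    ring
  rw [key, hrow, hcol]
  simp only [hankelMoment, evolCoeff, sub_mul, Finset.sum_sub_distrib]
  ring

lemma evolCoeff_self (n : ℕ) : evolCoeff n n = derivative (painleveSigma n) := by
  rw [evolCoeff, orthoCoeff_self, Finset.sum_eq_zero, sub_zero]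
  intro j hj
  have := Finset.mem_range.mp hj
  rw [if_neg (by omega)]

lemma evolCoeff_pred (n : ℕ) : evolCoeff (n + 1) n =
    derivative (orthoCoeff (n + 1) n) - painleveSigma (n + 1) * X := by
  rw [evolCoeff, Finset.sum_range_succ, Finset.sum_eq_zero, if_pos (by omega), orthoCoeff_self]
  · simp [painleveA_zero]
  · intro j hj
    have := Finset.mem_range.mp hj
    rw [if_neg (by omega)]

/-! ### The Toda equation -/

/-- Pairing `Q_{n+1}` with `Q_n` gives the first moment of `Q_n` that is not prescribed. -/
lemma moment_succ (n : ℕ) (h : painleveSigma (n + 1) ≠ 0) :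
    hankelMoment (orthoCoeff n) n (n + 1) = -orthoCoeff (n + 1) n := by
  have hp := moment_pairing (orthoCoeff (n + 1)) (orthoCoeff n) (n + 1) n
  rw [Finset.sum_range_succ, Finset.sum_range_succ, Finset.sum_eq_zero, Finset.sum_eq_zero,
    orthoCoeff_self, orthoCoeff_moment n n le_rfl, if_pos rfl] at hp
  · apply mul_left_cancel₀ h
    linear_combination hp
  · intro j hj
    have := Finset.mem_range.mp hj
    rw [orthoCoeff_moment _ _ (by omega), if_neg (by omega), mul_zero]
  · intro j hj
    have := Finset.mem_range.mp hj
    rw [orthoCoeff_moment _ _ (by omega), if_neg (by omega), mul_zero]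

lemma evol_moment_lt (n i : ℕ) (hi : i < n) :
    hankelMoment (evolCoeff n) n i = if i + 1 = n then -painleveSigma (n + 1) else 0 := by
  have h := derivative_moment n i hi.le
  rw [orthoCoeff_moment n i hi.le, if_neg hi.ne, derivative_zero,
    orthoCoeff_moment n (i + 1) hi] at h
  split_ifs at h ⊢ <;> linear_combination -h

lemma evol_moment_self (n : ℕ) : hankelMoment (evolCoeff n) n n =
    derivative (painleveSigma (n + 1)) - hankelMoment (orthoCoeff n) n (n + 1) := by
  have h := derivative_moment n n le_rfl
  rw [orthoCoeff_moment n n le_rfl, if_pos rfl] at h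
  linear_combination -h

/-- Inductive step for `q_{n,n-1} = -σ_n'`, from evaluating `L(Q_{n+1} (∂Q_{n+1} - Q̃_{n+1}))`
in two ways. -/
lemma subleading_step (n : ℕ) (h1 : painleveSigma (n + 1) ≠ 0) (h2 : painleveSigma (n + 2) ≠ 0)
    (ih : orthoCoeff (n + 1) n = -derivative (painleveSigma (n + 1))) :
    orthoCoeff (n + 2) (n + 1) = -derivative (painleveSigma (n + 2)) := by
  have hp := moment_pairing (orthoCoeff (n + 1)) (evolCoeff (n + 1)) (n + 1) (n + 1)
  have z1 : ∑ i ∈ range n, orthoCoeff (n + 1) i * hankelMoment (evolCoeff (n + 1)) (n + 1) i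
      = 0 := by
    refine Finset.sum_eq_zero fun j hj => ?_
    have := Finset.mem_range.mp hj
    rw [evol_moment_lt _ _ (by omega), if_neg (by omega), mul_zero]
  have z2 : ∑ j ∈ range (n + 1),
      evolCoeff (n + 1) j * hankelMoment (orthoCoeff (n + 1)) (n + 1) j = 0 := by
    refine Finset.sum_eq_zero fun j hj => ?_
    have := Finset.mem_range.mp hj
    rw [orthoCoeff_moment _ _ (by omega), if_neg (by omega), mul_zero]
  rw [Finset.sum_range_succ _ (n + 1), Finset.sum_range_succ _ n, z1,
    Finset.sum_range_succ _ (n + 1), z2, evol_moment_lt _ _ (by omega), if_pos rfl,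
    evol_moment_self, moment_succ (n + 1) h2, orthoCoeff_self, evolCoeff_self,
    orthoCoeff_moment _ _ le_rfl, if_pos rfl, ih] at hp
  apply mul_left_cancel₀ h1
  linear_combination hp

/-- The Toda equation, from evaluating `L(Q_n (∂Q_{n+1} - Q̃_{n+1}))` in two ways. -/
lemma toda_of_subleading (n : ℕ) (h1 : painleveSigma (n + 1) ≠ 0)
    (ih : orthoCoeff (n + 1) n = -derivative (painleveSigma (n + 1))) :
    painleveSigma (n + 2) * painleveSigma n =
      painleveSigma (n + 1) * derivative (derivative (painleveSigma (n + 1)))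
      - derivative (painleveSigma (n + 1)) ^ 2 + X * painleveSigma (n + 1) ^ 2 := by
  have hp := moment_pairing (orthoCoeff n) (evolCoeff (n + 1)) n (n + 1)
  have z1 : ∑ i ∈ range n, orthoCoeff n i * hankelMoment (evolCoeff (n + 1)) (n + 1) i
      = 0 := by
    refine Finset.sum_eq_zero fun j hj => ?_
    have := Finset.mem_range.mp hj
    rw [evol_moment_lt _ _ (by omega), if_neg (by omega), mul_zero]
  have z2 : ∑ j ∈ range n, evolCoeff (n + 1) j * hankelMoment (orthoCoeff n) n j = 0 := by
    refine Finset.sum_eq_zero fun j hj => ?_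
    have := Finset.mem_range.mp hj
    rw [orthoCoeff_moment _ _ (by omega), if_neg (by omega), mul_zero]
  rw [Finset.sum_range_succ _ n, z1, Finset.sum_range_succ _ (n + 1), Finset.sum_range_succ _ n,
    z2, evol_moment_lt _ _ (by omega), if_pos rfl, moment_succ n h1, orthoCoeff_self,
    evolCoeff_self, evolCoeff_pred, orthoCoeff_moment _ _ le_rfl, if_pos rfl, ih,
    derivative_neg] at hp
  linear_combination -hp

/-! ### Bilinear relations and Painlevé II -/

/-- The bilinear equation `D² r·q = 0` is passed from `(q, r)` to `(r, t)` by the Wronskian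
relation `t' q - t q' = c r²`. -/
lemma hirota_step (q r t : ℝ[X]) (c : ℕ) (hq : q ≠ 0)
    (hD : derivative (derivative r) * q - 2 * derivative r * derivative q
      + r * derivative (derivative q) = 0)
    (hW : derivative t * q - t * derivative q = c * r ^ 2) :
    derivative (derivative t) * r - 2 * derivative t * derivative r
      + t * derivative (derivative r) = 0 := by
  have hW' := congrArg derivative hW
  simp only [derivative_sub, derivative_mul, derivative_natCast, derivative_pow] at hW'
  simp [map_ofNat] at hW'
  apply mul_left_cancel₀ hq
  linear_combination r * hW' - 2 * derivative r * hW + t * hD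

/-- Two consecutive Toda equations and `D² r·q = 0` propagate the Wronskian relation, its
constant growing by `2`. -/
lemma wronskian_step (p q r t : ℝ[X]) (c : ℕ) (hq : q ≠ 0)
    (hT1 : r * p = q * derivative (derivative q) - derivative q ^ 2 + X * q ^ 2)
    (hT2 : t * q = r * derivative (derivative r) - derivative r ^ 2 + X * r ^ 2)
    (hD : derivative (derivative r) * q - 2 * derivative r * derivative q
      + r * derivative (derivative q) = 0)
    (hW : derivative r * p - r * derivative p = c * q ^ 2) :
    derivative t * q - t * derivative q = ((c + 2 : ℕ) : ℝ[X]) * r ^ 2 := by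
  have hT1' := congrArg derivative hT1
  have hT2' := congrArg derivative hT2
  have hD' := congrArg derivative hD
  simp [derivative_pow, map_ofNat] at hT1' hT2' hD'
  apply mul_left_cancel₀ (pow_ne_zero 2 hq)
  push_cast
  linear_combination q ^ 2 * hT2' - 2 * q * derivative q * hT2
    - r * (2 * derivative r * hT1 - r * hT1') + r ^ 2 * hW
    + r * q * hD' - (q * derivative r + r * derivative q) * hD

lemma painleveSigma_zero : painleveSigma 0 = 1 := by simp [painleveSigma]

lemma painleveSigma_one : painleveSigma 1 = X := by simp [painleveSigma, painleveA_zero]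

/-- A nonzero Wronskian forces its first entry to be nonzero. -/
lemma ne_zero_of_wronskian (q r t : ℝ[X]) (c : ℕ) (hc : c ≠ 0) (hr : r ≠ 0)
    (hW : derivative t * q - t * derivative q = c * r ^ 2) : t ≠ 0 := by
  rintro rfl
  simp [hc, hr] at hW

/-- The induction on `N`: nonvanishing of the determinants has to be carried along, since the
cancellations in each step divide by the preceding determinants. -/
lemma sigma_relations (N : ℕ) :
    painleveSigma N ≠ 0 ∧ painleveSigma (N + 1) ≠ 0 ∧
    orthoCoeff (N + 1) N = -derivative (painleveSigma (N + 1)) ∧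
    derivative (derivative (painleveSigma (N + 1))) * painleveSigma N
      - 2 * derivative (painleveSigma (N + 1)) * derivative (painleveSigma N)
      + painleveSigma (N + 1) * derivative (derivative (painleveSigma N)) = 0 ∧
    derivative (painleveSigma (N + 2)) * painleveSigma N
      - painleveSigma (N + 2) * derivative (painleveSigma N)
      = ((2 * N + 3 : ℕ) : ℝ[X]) * painleveSigma (N + 1) ^ 2 := by
  induction N with
  | zero =>
    have h1 : painleveSigma (0 + 1) ≠ 0 := by simp [painleveSigma_one]
    have hs : orthoCoeff (0 + 1) 0 = -derivative (painleveSigma (0 + 1)) := by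
      have := moment_succ 0 h1
      simp [hankelMoment, orthoCoeff_self, painleveSigma_zero, painleveA_one] at this
      simp [painleveSigma_one, this]
    have ht := toda_of_subleading 0 h1 hs
    simp only [zero_add, painleveSigma_zero, painleveSigma_one, mul_one, derivative_X,
      derivative_one, mul_zero] at ht hs h1 ⊢
    refine ⟨one_ne_zero, h1, hs, by simp, ?_⟩
    rw [ht]
    simp [derivative_pow, map_ofNat]
    ring
  | succ N ih =>
    obtain ⟨h0, h1, hs, hD, hW⟩ := ih
    have h2 := ne_zero_of_wronskian _ _ _ _ (by omega) h1 hW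
    have hs' := subleading_step N h1 h2 hs
    exact ⟨h1, h2, hs', hirota_step _ _ _ _ h0 hD hW,
      wronskian_step _ _ _ _ (2 * N + 3) h1 (toda_of_subleading N h1 hs)
        (toda_of_subleading (N + 1) h2 hs') (hirota_step _ _ _ _ h0 hD hW) hW⟩

/-- on any open interval `I` where `σ_N·σ_{N+1}` does not vanish,
`v = d/dx log(σ_{N+1}/σ_N)` solves the Painlevé II equation
`v'' = 2v³ − 4xv + 4(N+1)`, i.e. it is the rational solution of Painlevé II
with parameter `α = N + 1`. -/
theorem hankel_log_deriv_solves_painleveII (N : ℕ) (I : Set ℝ)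
    (hIopen : IsOpen I) (hIconn : I.OrdConnected)
    (hne : ∀ x ∈ I, Polynomial.eval x (painleveSigma N)
      * Polynomial.eval x (painleveSigma (N + 1)) ≠ 0)
    (v : ℝ → ℝ)
    (hv : ∀ x ∈ I, v x =
      Polynomial.eval x (Polynomial.derivative (painleveSigma (N + 1)))
        / Polynomial.eval x (painleveSigma (N + 1))
      - Polynomial.eval x (Polynomial.derivative (painleveSigma N))
        / Polynomial.eval x (painleveSigma N)) :
    ∀ x ∈ I, deriv (deriv v) x = 2 * v x ^ 3 - 4 * x * v x + 4 * (N + 1) := by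
  
  obtain ⟨-, h1, hs, hD, hW⟩ := sigma_relations N
  have hT := toda_of_subleading N h1 hs
  generalize painleveSigma (N + 2) = t at *
  generalize painleveSigma (N + 1) = r at *
  generalize painleveSigma N = q at *
  have hq : ∀ y ∈ I, q.eval y ≠ 0 := fun y hy => left_ne_zero_of_mul (hne y hy)
  have hr : ∀ y ∈ I, r.eval y ≠ 0 := fun y hy => right_ne_zero_of_mul (hne y hy)
  -- Riccati form of the two second-order relations: `v' = 2 t q / r² - 2x + v²`.
  have hv' : ∀ y ∈ I, HasDerivAt v
      (2 * (t.eval y * q.eval y / r.eval y ^ 2) - 2 * y + v y ^ 2) y := by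
    intro y hy
    have hqy := hq y hy
    have hry := hr y hy
    have hd := (((derivative r).hasDerivAt y).div (r.hasDerivAt y) hry).sub
      (((derivative q).hasDerivAt y).div (q.hasDerivAt y) hqy)
    have hev : v =ᶠ[nhds y] fun z => (derivative r).eval z / r.eval z
        - (derivative q).eval z / q.eval z :=
      Filter.eventually_of_mem (hIopen.mem_nhds hy) hv
    refine (hd.congr_of_eventuallyEq hev).congr_deriv ?_
    have hT := congrArg (eval y) hT
    have hD := congrArg (eval y) hD
    simp at hT hD
    rw [hv y hy, hT]
    field_simp
    linear_combination -(q.eval y * r.eval y) * hD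
  -- Differentiating the Riccati form brings in `t'`, which the Wronskian relation removes.
  intro x hx
  have hqx := hq x hx
  have hrx := hr x hx
  have hev : deriv v =ᶠ[nhds x] fun y =>
      2 * (t.eval y * q.eval y / r.eval y ^ 2) - 2 * y + v y ^ 2 :=
    Filter.eventually_of_mem (hIopen.mem_nhds hx) fun y hy => (hv' y hy).deriv
  have hd := ((((((t.hasDerivAt x).mul (q.hasDerivAt x)).div ((r.hasDerivAt x).pow 2)
    (pow_ne_zero 2 hrx)).const_mul 2).sub ((hasDerivAt_id x).const_mul 2)).add
      ((hv' x hx).pow 2))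
  have hd2 := (hd.congr_of_eventuallyEq hev).deriv
  rw [hd2]
  have hW := congrArg (eval x) hW
  simp at hW
  rw [hv x hx]
  simp
  field_simp
  linear_combination 2 * q.eval x ^ 3 * r.eval x * hW
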